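/- arXiv:2301.11996 — 3 statements merged into one kernel-verified Lean document; each statement's English description precedes it below -/
import Mathlib

section
/- Let Ω := {x ∈ ℝ³ : 1 < |x| < 2} be the spherical shell and let χ : ℝ → [0,1] be a smooth cut-off with χ(y) = 1 for |y| ≤ 1 and χ(y) = 0 for |y| ≥ 2. Let F₀ : cl(Ω) → ℝ be continuously differentiable with |∇F₀| ≤ 1 on cl(Ω), let F₁ : cl(Ω) × S² → ℝ be such that x ↦ F₁(x,w) is continuously differentiable with |∇ₓF₁| ≤ 1 for every w, and let Ψ₀ : ∂Ω × S² → ℝ be measurable with |Ψ₀| ≤ 1. For ε ∈ (0,1) define the boundary datum h(x₀,w) := −ε (w·∇F₀)(x₀) − ε² (w·∇ₓF₁)(x₀,w) − χ(ε⁻¹ arcsin(−w·n(x₀))) Ψ₀(x₀,w) on γ₋. Then (∫_{γ₋} |h|² dγ)^{1/2} ≤ C ε for a constant C depending only on Ω (not on ε, F₀, F₁, Ψ₀). -/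
open MeasureTheory Real Set
open scoped RealInnerProductSpace

noncomputable section

abbrev E3 : Type := EuclideanSpace ℝ (Fin 3)
abbrev Sph : Type := Metric.sphere (0 : E3) 1

/-- The surface measure on the unit sphere `S²` (total mass `4π`). -/
def sphμ : Measure Sph := (volume : Measure E3).toSphere

/-- The spherical shell `Ω = {x ∈ ℝ³ : 1 < |x| < 2}`. -/
def Shell : Set E3 := {x : E3 | 1 < ‖x‖ ∧ ‖x‖ < 2}

/-- The outward unit normal on `∂Ω`: `x/2` on `{|x| = 2}` and `-x` on `{|x| = 1}`. -/
def nvec (x : E3) : E3 := if ‖x‖ = 2 then (2:ℝ)⁻¹ • x else -x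

/-- The product measure `dx ⊗ dw` on `Ω × S²`. -/
def bulkμ : Measure (E3 × Sph) := ((volume : Measure E3).restrict Shell).prod sphμ

/-- The measure `dσ(x) ⊗ dw` on `∂Ω × S²`, `σ` the 2-dimensional Hausdorff measure. -/
def bdryμ : Measure (E3 × Sph) := ((μH[2] : Measure E3).restrict (frontier Shell)).prod sphμ

/-- The outgoing boundary `γ₊ = {w · n(x) > 0}`. -/
def gammaPlus : Set (E3 × Sph) := {p : E3 × Sph | 0 < ⟪(p.2 : E3), nvec p.1⟫}

/-- The incoming boundary `γ₋ = {w · n(x) < 0}`. -/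
def gammaMinus : Set (E3 × Sph) := {p : E3 × Sph | ⟪(p.2 : E3), nvec p.1⟫ < 0}

/-- The velocity average `R̄(x) = (1/4π) ∫_{S²} R(x,w) dw`. -/
def vavg (R : E3 → E3 → ℝ) (x : E3) : ℝ := (4 * π)⁻¹ * ∫ w : Sph, R x (w : E3) ∂sphμ

/-- A smooth cut-off function: `0 ≤ χ ≤ 1`, `χ = 1` on `{|y| ≤ 1}`, `χ = 0` on `{|y| ≥ 2}`. -/
def IsCutoff (χ : ℝ → ℝ) : Prop :=
  ContDiff ℝ (⊤ : ℕ∞) χ ∧ (∀ y, χ y ∈ Icc (0:ℝ) 1) ∧ (∀ y, |y| ≤ 1 → χ y = 1) ∧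
    (∀ y, 2 ≤ |y| → χ y = 0)

/-!
The two derivative terms of the boundary datum are pointwise `O(ε)`, so only the cut-off term, which
is `O(1)`, needs an argument. Since `|t| ≤ |arcsin t|`, it is supported where `|w·n| ≤ 2ε`. This
grazing set has `σ ⊗ dw`-measure `O(ε)`, because in polar coordinates a band of width `δ` on the
sphere spans a slice of the ball that fits into a box with one side `2δ`; and the weight `|w·n|` of
`dγ` is itself at most `2ε` there. Hence the grazing set has `γ`-measure `O(ε²)`, and the cut-off
term is `O(ε)` in `L²(γ)`. The boundary has finite area since each closed hemisphere is the image of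
a compact set under inverse stereographic projection, which is locally Lipschitz.
-/

open Module Metric
open scoped ENNReal Pointwise

section HausdorffMeasureSphere

variable {E F : Type*} [NormedAddCommGroup E] [MeasurableSpace E] [BorelSpace E]
  [NormedAddCommGroup F] [NormedSpace ℝ F] [FiniteDimensional ℝ F]

lemma hausdorffMeasure_image_lt_top_of_locallyLipschitz {f : F → E} (hf : LocallyLipschitz f)
    {K : Set F} (hK : IsCompact K) : μH[finrank ℝ F] (f '' K) < ⊤ := by
  let e : F ≃L[ℝ] (Fin (finrank ℝ F) → ℝ) := ContinuousLinearEquiv.ofFinrankEq (by simp)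
  have he : LocallyLipschitz (f ∘ e.symm) := hf.comp e.symm.lipschitz.locallyLipschitz
  have heK : IsCompact (e '' K) := hK.image e.continuous
  obtain ⟨L, hL⟩ := he.locallyLipschitzOn.exists_lipschitzOnWith_of_compact heK
  have himage : f '' K = (f ∘ e.symm) '' (e '' K) := by simp [image_image]
  have hvol : (μH[finrank ℝ F] : Measure (Fin (finrank ℝ F) → ℝ)) = volume := by
    simpa using hausdorffMeasure_pi_real (ι := Fin (finrank ℝ F))
  calc μH[finrank ℝ F] (f '' K)
      ≤ (L : ℝ≥0∞) ^ (finrank ℝ F : ℝ) * μH[finrank ℝ F] (e '' K) :=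
        himage ▸ hL.hausdorffMeasure_image_le (Nat.cast_nonneg _)
    _ < ⊤ := ENNReal.mul_lt_top (by simp) (hvol ▸ heK.measure_lt_top)

variable [InnerProductSpace ℝ E] {d : ℕ} [Fact (finrank ℝ E = d + 1)]

lemma hausdorffMeasure_hemisphere_lt_top {v : E} (hv : ‖v‖ = 1) :
    μH[d] (sphere (0 : E) 1 ∩ {x | ⟪v, x⟫ ≤ 0}) < ⊤ := by
  have : FiniteDimensional ℝ E := .of_fact_finrank_eq_succ d
  set H : Set E := sphere (0 : E) 1 ∩ {x | ⟪v, x⟫ ≤ 0}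
  have hinner : ∀ x ∈ H, ⟪v, x⟫ ≠ 1 := fun x hx h ↦ by linarith [show ⟪v, x⟫ ≤ 0 from hx.2]
  have hH : IsCompact H :=
    (isCompact_sphere 0 1).inter_right (isClosed_le (by fun_prop) continuous_const)
  have hproj : IsCompact (stereoToFun v '' H) :=
    hH.image_of_continuousOn (continuousOn_stereoToFun.mono hinner)
  have hchart : LocallyLipschitz fun w : (ℝ ∙ v)ᗮ ↦ stereoInvFunAux v w :=
    (contDiff_stereoInvFunAux.comp (ℝ ∙ v)ᗮ.subtypeL.contDiff).locallyLipschitz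
  have hcover : H ⊆ (fun w : (ℝ ∙ v)ᗮ ↦ stereoInvFunAux v w) '' (stereoToFun v '' H) := by
    intro x hx
    have hxv : x ≠ v := by
      rintro rfl
      exact hinner x hx (by simp [hv])
    exact ⟨_, mem_image_of_mem _ hx, congrArg Subtype.val (stereo_left_inv hv (x := ⟨x, hx.1⟩) hxv)⟩
  have hdim : finrank ℝ (ℝ ∙ v)ᗮ = d :=
    Submodule.finrank_orthogonal_span_singleton (norm_ne_zero_iff.1 (by simp [hv]))
  exact (measure_mono hcover).trans_lt
    (hdim ▸ hausdorffMeasure_image_lt_top_of_locallyLipschitz hchart hproj)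

lemma hausdorffMeasure_unitSphere_lt_top : μH[d] (sphere (0 : E) 1) < ⊤ := by
  have : Nontrivial E :=
    nontrivial_of_finrank_pos (R := ℝ) (by simp [Fact.out (p := finrank ℝ E = d + 1)])
  obtain ⟨v, hv⟩ := exists_norm_eq E zero_le_one
  have hcover : sphere (0 : E) 1 ⊆
      (sphere 0 1 ∩ {x | ⟪v, x⟫ ≤ 0}) ∪ (sphere 0 1 ∩ {x | ⟪-v, x⟫ ≤ 0}) := by
    intro x hx
    rcases le_total ⟪v, x⟫ 0 with h | h
    · exact .inl ⟨hx, h⟩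
    · exact .inr ⟨hx, by simpa [inner_neg_left] using h⟩
  exact (measure_mono hcover).trans_lt <| (measure_union_le _ _).trans_lt <| ENNReal.add_lt_top.2
    ⟨hausdorffMeasure_hemisphere_lt_top hv, hausdorffMeasure_hemisphere_lt_top (by rwa [norm_neg])⟩

lemma hausdorffMeasure_sphere_lt_top {r : ℝ} (hr : 0 < r) : μH[d] (sphere (0 : E) r) < ⊤ := by
  have hsphere : sphere (0 : E) r = r • sphere (0 : E) 1 := by
    rw [smul_sphere' hr.ne', smul_zero, norm_of_nonneg hr.le, mul_one]
  rw [hsphere, Measure.hausdorffMeasure_smul₀ (Nat.cast_nonneg d) hr.ne', ENNReal.smul_def,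
    smul_eq_mul]
  exact ENNReal.mul_lt_top ENNReal.coe_lt_top hausdorffMeasure_unitSphere_lt_top

end HausdorffMeasureSphere

section SphericalBand

variable {E : Type*} [NormedAddCommGroup E] [InnerProductSpace ℝ E] [FiniteDimensional ℝ E]
  [MeasurableSpace E] [BorelSpace E]

lemma volume_setOf_abs_inner_le {ι : Type*} [Fintype ι] (b : OrthonormalBasis ι ℝ E) (r : ι → ℝ) :
    volume {x : E | ∀ i, |⟪b i, x⟫| ≤ r i} = 2 ^ finrank ℝ E * ∏ i, ENNReal.ofReal (r i) := by
  let box : Set (ι → ℝ) := univ.pi fun i ↦ Icc (-r i) (r i)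
  have hbox : MeasurableSet box := .univ_pi fun _ ↦ measurableSet_Icc
  have hrepr := (EuclideanSpace.volume_preserving_symm_measurableEquiv_toLp ι).comp
    b.measurePreserving_repr
  have hpre : {x : E | ∀ i, |⟪b i, x⟫| ≤ r i} =
      ((MeasurableEquiv.toLp 2 (ι → ℝ)).symm ∘ b.repr) ⁻¹' box := by
    ext x
    simp only [mem_ofPred_eq, abs_le, mem_preimage, box, mem_univ_pi, mem_Icc, ← b.repr_apply_apply]
    rfl
  rw [hpre, hrepr.measure_preimage hbox.nullMeasurableSet, volume_pi_pi,
    finrank_eq_card_basis b.toBasis, ← Finset.card_univ, ← Finset.prod_const,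
    ← Finset.prod_mul_distrib]
  refine Finset.prod_congr rfl fun i _ ↦ ?_
  rw [Real.volume_Icc, sub_neg_eq_add, ← two_mul, ENNReal.ofReal_mul zero_le_two,
    ENNReal.ofReal_ofNat]

lemma volume_closedBall_inter_slab_le {n : E} (hn : ‖n‖ = 1) (δ : ℝ) :
    volume (closedBall (0 : E) 1 ∩ {x | |⟪x, n⟫| ≤ δ}) ≤
      2 ^ finrank ℝ E * ENNReal.ofReal δ := by
  classical
  have hortho : Orthonormal ℝ ((↑) : ({n} : Set E) → E) :=
    ⟨fun i ↦ by rw [show (i : E) = n from i.2, hn],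
      fun i j hij ↦ absurd (Subsingleton.elim i j) hij⟩
  obtain ⟨u, b, hnu, hb⟩ := hortho.exists_orthonormalBasis_extension
  let i₀ : u := ⟨n, hnu rfl⟩
  let r : u → ℝ := Function.update 1 i₀ δ
  have hsub : closedBall (0 : E) 1 ∩ {x | |⟪x, n⟫| ≤ δ} ⊆ {x | ∀ i, |⟪b i, x⟫| ≤ r i} := by
    rintro x ⟨hx, hxn⟩ i
    rcases eq_or_ne i i₀ with rfl | hi
    · simpa [r, hb, i₀, real_inner_comm] using hxn
    · calc |⟪b i, x⟫| ≤ ‖b i‖ * ‖x‖ := abs_real_inner_le_norm _ _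
        _ ≤ r i := by simpa [r, hi] using hx
  have hprod : ∏ i, ENNReal.ofReal (r i) = ENNReal.ofReal δ := by
    rw [Finset.prod_eq_single i₀ (fun i _ hi ↦ by simp [r, hi]) (by simp)]
    simp [r]
  exact (measure_mono hsub).trans_eq (by rw [volume_setOf_abs_inner_le, hprod])

lemma toSphere_band_le {n : E} (hn : ‖n‖ = 1) (δ : ℝ) :
    (volume : Measure E).toSphere {w | |⟪(w : E), n⟫| ≤ δ} ≤
      finrank ℝ E * 2 ^ finrank ℝ E * ENNReal.ofReal δ := by
  have hband : MeasurableSet {w : sphere (0 : E) 1 | |⟪(w : E), n⟫| ≤ δ} :=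
    measurableSet_le (by fun_prop) measurable_const
  rw [Measure.toSphere_apply' _ hband, mul_assoc]
  gcongr
  refine (measure_mono ?_).trans (volume_closedBall_inter_slab_le hn δ)
  rintro _ ⟨t, ⟨ht0, ht1⟩, _, ⟨w, hw, rfl⟩, rfl⟩
  refine ⟨?_, ?_⟩
  · simpa [norm_smul, abs_of_pos ht0] using ht1.le
  · calc |⟪t • (w : E), n⟫| = t * |⟪(w : E), n⟫| := by
          rw [real_inner_smul_left, abs_mul, abs_of_pos ht0]
      _ ≤ |⟪(w : E), n⟫| := mul_le_of_le_one_left (abs_nonneg _) ht1.le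
      _ ≤ δ := hw

end SphericalBand

lemma sqrt_setIntegral_sq_mul_abs_le_of_eLpNorm_le {Y : Type*} [MeasurableSpace Y]
    {μ : Measure Y} {f t : Y → ℝ} (ht : Measurable t) {c : ℝ} (hc : 0 ≤ c)
    (hf : eLpNorm f 2 (μ.withDensity fun y ↦ ‖t y‖ₑ) ≤ ENNReal.ofReal c) (s : Set Y) :
    √(∫ y in s, f y ^ 2 * |t y| ∂μ) ≤ c := by
  have hintegral_le : ‖∫ y in s, f y ^ 2 * |t y| ∂μ‖ₑ ≤ ENNReal.ofReal (c ^ 2) := calc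
    ‖∫ y in s, f y ^ 2 * |t y| ∂μ‖ₑ
      ≤ ∫⁻ y in s, ‖f y ^ 2 * |t y|‖ₑ ∂μ := enorm_integral_le_lintegral_enorm _
    _ ≤ ∫⁻ y, ‖f y ^ 2 * |t y|‖ₑ ∂μ := setLIntegral_le_lintegral _ _
    _ = ∫⁻ y, ‖f y‖ₑ ^ (2 : ℝ) ∂(μ.withDensity fun y ↦ ‖t y‖ₑ) := by
        rw [lintegral_withDensity_eq_lintegral_mul_non_measurable _ ht.enorm (by simp)]
        simp [enorm_mul, mul_comm]
    _ = eLpNorm f 2 (μ.withDensity fun y ↦ ‖t y‖ₑ) ^ (2 : ℝ) :=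
        (eLpNorm_nnreal_pow_eq_lintegral (p := 2) two_ne_zero).symm
    _ ≤ ENNReal.ofReal (c ^ 2) := by
        rw [ENNReal.rpow_two, ENNReal.ofReal_pow hc]
        gcongr
  rw [Real.sqrt_le_left hc]
  rw [← ofReal_norm, ENNReal.ofReal_le_ofReal_iff (sq_nonneg c)] at hintegral_le
  exact (le_norm_self _).trans hintegral_le

lemma abs_le_abs_arcsin {t : ℝ} (ht : |t| ≤ 1) : |t| ≤ |arcsin t| := by
  simpa [sin_arcsin (abs_le.1 ht).1 (abs_le.1 ht).2] using abs_sin_le_abs (x := arcsin t)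

section BoundaryDatum

variable {X E : Type*} [NormedAddCommGroup E] [InnerProductSpace ℝ E]

/-- The boundary datum `h(x,w) = -ε a - ε² b - χ(ε⁻¹ arcsin(-w·ν(x))) ψ` for a field `ν` of
normals on an abstract boundary `X`. The functions `a`, `b` stand for the directional derivatives
`w·∇F₀`, `w·∇ₓF₁` and `ψ` for the data `Ψ₀` of the boundary layer. -/
def boundaryDatum (ν : X → E) (χ : ℝ → ℝ) (a b ψ : X × sphere (0 : E) 1 → ℝ) (ε : ℝ)
    (p : X × sphere (0 : E) 1) : ℝ :=
  -ε * a p - ε ^ 2 * b p - χ (ε⁻¹ * arcsin (-⟪(p.2 : E), ν p.1⟫)) * ψ p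

/-- The directions that are tangential to the boundary up to `δ`, i.e. `|w·ν(x)| ≤ δ`. -/
def grazingSet (ν : X → E) (δ : ℝ) : Set (X × sphere (0 : E) 1) :=
  {p | |⟪(p.2 : E), ν p.1⟫| ≤ δ}

lemma abs_inner_sphere_le_one {n : E} (hn : ‖n‖ ≤ 1) (w : sphere (0 : E) 1) :
    |⟪(w : E), n⟫| ≤ 1 :=
  (abs_real_inner_le_norm (w : E) n).trans (by simpa using hn)

lemma cutoff_arcsin_eq_zero_of_notMem_grazingSet {ν : X → E} {χ : ℝ → ℝ} {ε : ℝ}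
    {p : X × sphere (0 : E) 1} (hε : 0 < ε) (hχ : ∀ y, 2 ≤ |y| → χ y = 0) (hν : ‖ν p.1‖ = 1)
    (hp : p ∉ grazingSet ν (2 * ε)) : χ (ε⁻¹ * arcsin (-⟪(p.2 : E), ν p.1⟫)) = 0 := by
  apply hχ
  have harcsin : 2 * ε ≤ |arcsin (-⟪(p.2 : E), ν p.1⟫)| := calc
    2 * ε ≤ |-⟪(p.2 : E), ν p.1⟫| := by simpa using (not_le.1 hp).le
    _ ≤ _ := abs_le_abs_arcsin (by simpa using abs_inner_sphere_le_one hν.le p.2)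
  rwa [abs_mul, abs_of_pos (inv_pos.2 hε), inv_mul_eq_div, le_div_iff₀ hε]

lemma abs_boundaryDatum_le {ν : X → E} {χ : ℝ → ℝ} {a b ψ : X × sphere (0 : E) 1 → ℝ} {ε : ℝ}
    {p : X × sphere (0 : E) 1} (hε : ε ∈ Ioo (0 : ℝ) 1) (hχ_le : ∀ y, |χ y| ≤ 1)
    (hχ_zero : ∀ y, 2 ≤ |y| → χ y = 0) (hν : ‖ν p.1‖ = 1) (ha : |a p| ≤ 1) (hb : |b p| ≤ 1)
    (hψ : |ψ p| ≤ 1) :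
    |boundaryDatum ν χ a b ψ ε p| ≤ 2 * ε + (grazingSet ν (2 * ε)).indicator (fun _ ↦ 1) p := by
  obtain ⟨hε0, hε1⟩ := hε
  set c : ℝ := χ (ε⁻¹ * arcsin (-⟪(p.2 : E), ν p.1⟫))
  have hlayer : |c * ψ p| ≤ (grazingSet ν (2 * ε)).indicator (fun _ ↦ 1) p := by
    by_cases hp : p ∈ grazingSet ν (2 * ε)
    · rw [indicator_of_mem hp, abs_mul]
      exact mul_le_one₀ (hχ_le _) (abs_nonneg _) hψ
    · simp [c, hp, cutoff_arcsin_eq_zero_of_notMem_grazingSet hε0 hχ_zero hν hp]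
  have hfirst : |-ε * a p| ≤ ε := by
    rw [abs_mul, abs_neg, abs_of_pos hε0]
    exact mul_le_of_le_one_right hε0.le ha
  have hsecond : |ε ^ 2 * b p| ≤ ε := calc
    |ε ^ 2 * b p| = ε ^ 2 * |b p| := by rw [abs_mul, abs_of_pos (by positivity)]
    _ ≤ ε ^ 2 := mul_le_of_le_one_right (by positivity) hb
    _ ≤ ε := pow_le_of_le_one hε0.le hε1.le two_ne_zero
  calc |boundaryDatum ν χ a b ψ ε p|
      ≤ |-ε * a p| + |ε ^ 2 * b p| + |c * ψ p| :=
        (abs_sub _ _).trans (by gcongr; exact abs_sub _ _)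
    _ ≤ _ := by linarith

variable [MeasurableSpace X] [MeasurableSpace E] [BorelSpace E] [FiniteDimensional ℝ E]

/-- The measure `dγ = |w·ν(x)| dσ(x) dw` on the product of an abstract boundary `X` with the unit
sphere; incoming and outgoing directions both carry mass. -/
def fluxMeasure (σ : Measure X) (ν : X → E) : Measure (X × sphere (0 : E) 1) :=
  (σ.prod (volume : Measure E).toSphere).withDensity fun p ↦ ‖⟪(p.2 : E), ν p.1⟫‖ₑ

variable {σ : Measure X} {ν : X → E}

lemma measurable_inner_sphere (hν : Measurable ν) :
    Measurable fun p : X × sphere (0 : E) 1 ↦ ⟪(p.2 : E), ν p.1⟫ := by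
  fun_prop

lemma measurableSet_grazingSet (hν : Measurable ν) (δ : ℝ) : MeasurableSet (grazingSet ν δ) :=
  measurableSet_le (measurable_inner_sphere hν).abs measurable_const

lemma ae_fluxMeasure_of_ae {P : X × sphere (0 : E) 1 → Prop}
    (h : ∀ᵐ p ∂σ.prod (volume : Measure E).toSphere, P p) : ∀ᵐ p ∂fluxMeasure σ ν, P p :=
  (withDensity_absolutelyContinuous _ _).ae_le h

lemma isFiniteMeasure_fluxMeasure [IsFiniteMeasure σ] (hν_norm : ∀ᵐ x ∂σ, ‖ν x‖ = 1) :
    IsFiniteMeasure (fluxMeasure σ ν) := by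
  have hmass := measure_ne_top (σ.prod (volume : Measure E).toSphere) univ
  refine isFiniteMeasure_withDensity (ne_top_of_le_ne_top hmass ?_)
  rw [← lintegral_one]
  refine lintegral_mono_ae ?_
  filter_upwards [Measure.quasiMeasurePreserving_fst.ae hν_norm] with p hp
  simpa [← ofReal_norm] using abs_inner_sphere_le_one hp.le p.2

lemma prod_toSphere_grazingSet_le (hν : Measurable ν) (hν_norm : ∀ᵐ x ∂σ, ‖ν x‖ = 1) (δ : ℝ) :
    σ.prod (volume : Measure E).toSphere (grazingSet ν δ) ≤
      finrank ℝ E * 2 ^ finrank ℝ E * ENNReal.ofReal δ * σ univ := by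
  rw [Measure.prod_apply (measurableSet_grazingSet hν δ), ← lintegral_const]
  exact lintegral_mono_ae (hν_norm.mono fun x hx ↦ toSphere_band_le hx δ)

lemma fluxMeasure_grazingSet_le (hν : Measurable ν) (hν_norm : ∀ᵐ x ∂σ, ‖ν x‖ = 1) (δ : ℝ) :
    fluxMeasure σ ν (grazingSet ν δ) ≤
      ENNReal.ofReal δ ^ 2 * (finrank ℝ E * 2 ^ finrank ℝ E * σ univ) := by
  have hgrazing := measurableSet_grazingSet hν δ
  calc fluxMeasure σ ν (grazingSet ν δ)
      = ∫⁻ p in grazingSet ν δ, ‖⟪(p.2 : E), ν p.1⟫‖ₑ ∂σ.prod (volume : Measure E).toSphere :=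
        withDensity_apply _ hgrazing
    _ ≤ ∫⁻ _ in grazingSet ν δ, ENNReal.ofReal δ ∂σ.prod (volume : Measure E).toSphere :=
        setLIntegral_mono measurable_const fun p hp ↦ by
          rw [← ofReal_norm]
          exact ENNReal.ofReal_le_ofReal hp
    _ = ENNReal.ofReal δ * σ.prod (volume : Measure E).toSphere (grazingSet ν δ) :=
        setLIntegral_const _ _
    _ ≤ ENNReal.ofReal δ * (finrank ℝ E * 2 ^ finrank ℝ E * ENNReal.ofReal δ * σ univ) := by
        gcongr
        exact prod_toSphere_grazingSet_le hν hν_norm δ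
    _ = _ := by ring

lemma eLpNorm_const_add_indicator_grazingSet_le (hν : Measurable ν)
    (hν_norm : ∀ᵐ x ∂σ, ‖ν x‖ = 1) {δ : ℝ} (hδ : 0 ≤ δ) :
    eLpNorm (fun p ↦ δ + (grazingSet ν δ).indicator (fun _ ↦ (1 : ℝ)) p) 2 (fluxMeasure σ ν) ≤
      ENNReal.ofReal δ * (fluxMeasure σ ν univ ^ (1 / 2 : ℝ) +
        (finrank ℝ E * 2 ^ finrank ℝ E * σ univ) ^ (1 / 2 : ℝ)) := by
  have hgrazing := measurableSet_grazingSet hν δ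
  have hhalf : (0 : ℝ) ≤ 1 / 2 := by norm_num
  calc eLpNorm (fun p ↦ δ + (grazingSet ν δ).indicator (fun _ ↦ (1 : ℝ)) p) 2 (fluxMeasure σ ν)
      ≤ eLpNorm (fun _ ↦ δ) 2 (fluxMeasure σ ν) +
          eLpNorm ((grazingSet ν δ).indicator fun _ ↦ (1 : ℝ)) 2 (fluxMeasure σ ν) :=
        eLpNorm_add_le aestronglyMeasurable_const
          (aestronglyMeasurable_const.indicator hgrazing) one_le_two
    _ = ENNReal.ofReal δ * fluxMeasure σ ν univ ^ (1 / 2 : ℝ) +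
          fluxMeasure σ ν (grazingSet ν δ) ^ (1 / 2 : ℝ) := by
        rw [eLpNorm_const' _ two_ne_zero ENNReal.ofNat_ne_top,
          eLpNorm_indicator_const hgrazing two_ne_zero ENNReal.ofNat_ne_top,
          Real.enorm_of_nonneg hδ, enorm_one, one_mul, ENNReal.toReal_ofNat]
    _ ≤ ENNReal.ofReal δ * fluxMeasure σ ν univ ^ (1 / 2 : ℝ) +
          (ENNReal.ofReal δ ^ 2 * (finrank ℝ E * 2 ^ finrank ℝ E * σ univ)) ^ (1 / 2 : ℝ) := by
        gcongr
        exact fluxMeasure_grazingSet_le hν hν_norm δ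
    _ = _ := by
        rw [ENNReal.mul_rpow_of_nonneg _ _ hhalf, ← ENNReal.rpow_two, ← ENNReal.rpow_mul, mul_add]
        norm_num

theorem boundary_data_estimate_general [IsFiniteMeasure σ] (hν : Measurable ν)
    (hν_norm : ∀ᵐ x ∂σ, ‖ν x‖ = 1) :
    ∃ C > (0 : ℝ), ∀ χ : ℝ → ℝ, (∀ y, |χ y| ≤ 1) → (∀ y, 2 ≤ |y| → χ y = 0) →
      ∀ a b ψ : X × sphere (0 : E) 1 → ℝ,
      (∀ᵐ p ∂σ.prod (volume : Measure E).toSphere, |a p| ≤ 1 ∧ |b p| ≤ 1 ∧ |ψ p| ≤ 1) →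
      ∀ ε ∈ Ioo (0 : ℝ) 1,
        eLpNorm (boundaryDatum ν χ a b ψ ε) 2 (fluxMeasure σ ν) ≤ ENNReal.ofReal (C * ε) := by
  have := isFiniteMeasure_fluxMeasure (σ := σ) hν_norm
  set K : ℝ≥0∞ := fluxMeasure σ ν univ ^ (1 / 2 : ℝ) +
    (finrank ℝ E * 2 ^ finrank ℝ E * σ univ) ^ (1 / 2 : ℝ)
  have hK : K ≠ ⊤ := by finiteness
  refine ⟨2 * (K.toReal + 1), by positivity, fun χ hχ_le hχ_zero a b ψ hbound ε hε ↦ ?_⟩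
  have hpointwise : ∀ᵐ p ∂fluxMeasure σ ν, ‖boundaryDatum ν χ a b ψ ε p‖ ≤
      2 * ε + (grazingSet ν (2 * ε)).indicator (fun _ ↦ 1) p := by
    refine ae_fluxMeasure_of_ae ?_
    filter_upwards [hbound, Measure.quasiMeasurePreserving_fst.ae hν_norm] with p ⟨ha, hb, hψ⟩ hp
    exact abs_boundaryDatum_le hε hχ_le hχ_zero hp ha hb hψ
  have hε0 : 0 ≤ 2 * ε := by linarith [hε.1]
  calc eLpNorm (boundaryDatum ν χ a b ψ ε) 2 (fluxMeasure σ ν)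
      ≤ ENNReal.ofReal (2 * ε) * K := (eLpNorm_mono_ae_real hpointwise).trans
        (eLpNorm_const_add_indicator_grazingSet_le hν hν_norm hε0)
    _ = ENNReal.ofReal (2 * ε * K.toReal) := by
        rw [ENNReal.ofReal_mul hε0, ENNReal.ofReal_toReal hK]
    _ ≤ _ := ENNReal.ofReal_le_ofReal (by linarith)

end BoundaryDatum

section Shell

lemma norm_eq_one_or_two_of_mem_frontier_shell {x : E3} (hx : x ∈ frontier Shell) :
    ‖x‖ = 1 ∨ ‖x‖ = 2 := by
  have hShell : Shell = norm ⁻¹' Ioo (1 : ℝ) 2 := rfl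
  rw [hShell] at hx
  simpa [frontier_Ioo one_lt_two] using continuous_norm.frontier_preimage_subset _ hx

lemma norm_nvec {x : E3} (hx : x ∈ frontier Shell) : ‖nvec x‖ = 1 := by
  rcases norm_eq_one_or_two_of_mem_frontier_shell hx with h | h <;> simp [nvec, norm_smul, h]

lemma measurable_nvec : Measurable nvec :=
  .ite (measurableSet_eq_fun measurable_norm measurable_const) (by fun_prop) (by fun_prop)

lemma ae_mem_frontier_shell :
    ∀ᵐ x ∂(μH[2] : Measure E3).restrict (frontier Shell), x ∈ frontier Shell :=
  ae_restrict_mem isClosed_frontier.measurableSet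

instance isFiniteMeasure_restrict_frontier_shell :
    IsFiniteMeasure ((μH[2] : Measure E3).restrict (frontier Shell)) := by
  have : Fact (finrank ℝ E3 = 2 + 1) := ⟨by simp⟩
  have hfinite {r : ℝ} (hr : 0 < r) : (μH[2] : Measure E3) (sphere (0 : E3) r) < ⊤ := by
    exact_mod_cast hausdorffMeasure_sphere_lt_top (E := E3) (d := 2) hr
  have hsub : frontier Shell ⊆ sphere (0 : E3) 1 ∪ sphere 0 2 := fun x hx ↦ by
    simpa using norm_eq_one_or_two_of_mem_frontier_shell hx
  refine isFiniteMeasure_restrict.2 (ne_of_lt ?_)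
  exact (measure_mono hsub).trans_lt <| (measure_union_le _ _).trans_lt <|
    ENNReal.add_lt_top.2 ⟨hfinite one_pos, hfinite two_pos⟩

end Shell

lemma abs_apply_sphere_le_one {E : Type*} [NormedAddCommGroup E] [NormedSpace ℝ E]
    {L : E →L[ℝ] ℝ} (hL : ‖L‖ ≤ 1) (w : sphere (0 : E) 1) : |L w| ≤ 1 := by
  simpa using L.le_of_opNorm_le hL (w : E)

/-- The boundary datum
`h = −ε w·∇F₀ − ε² w·∇ₓF₁ − χ(ε⁻¹ arcsin(−w·n)) Ψ₀` satisfies `‖h‖_{L²(γ₋)} ≤ C ε`. -/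
theorem boundary_data_estimate :
    ∃ C > (0:ℝ), ∀ χ : ℝ → ℝ, IsCutoff χ →
      ∀ F₀ : E3 → ℝ, ∀ F₁ Ψ₀ : E3 → E3 → ℝ, ∀ ε ∈ Ioo (0:ℝ) 1,
      ContDiffOn ℝ 1 F₀ (closure Shell) →
      (∀ x ∈ closure Shell, ‖fderivWithin ℝ F₀ (closure Shell) x‖ ≤ 1) →
      (∀ w : E3, ‖w‖ = 1 → ContDiffOn ℝ 1 (fun x => F₁ x w) (closure Shell)) →
      (∀ w : E3, ‖w‖ = 1 → ∀ x ∈ closure Shell,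
        ‖fderivWithin ℝ (fun x => F₁ x w) (closure Shell) x‖ ≤ 1) →
      Measurable (fun p : E3 × Sph => Ψ₀ p.1 (p.2 : E3)) →
      (∀ x w : E3, |Ψ₀ x w| ≤ 1) →
      Real.sqrt (∫ p in gammaMinus,
          (-ε * fderivWithin ℝ F₀ (closure Shell) p.1 (p.2 : E3)
            - ε^2 * fderivWithin ℝ (fun x => F₁ x (p.2 : E3)) (closure Shell) p.1 (p.2 : E3)
            - χ (ε⁻¹ * Real.arcsin (-⟪(p.2 : E3), nvec p.1⟫)) * Ψ₀ p.1 (p.2 : E3))^2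
          * |⟪(p.2 : E3), nvec p.1⟫| ∂bdryμ) ≤ C * ε := by
  obtain ⟨C, hC, hestimate⟩ := boundary_data_estimate_general measurable_nvec
    (ae_mem_frontier_shell.mono fun _ ↦ norm_nvec)
  refine ⟨C, hC, fun χ ⟨_, hχ_mem, _, hχ_zero⟩ F₀ F₁ Ψ₀ ε hε _ hF₀ _ hF₁ _ hΨ₀ ↦ ?_⟩
  have hχ_le (y : ℝ) : |χ y| ≤ 1 := by simpa [abs_of_nonneg (hχ_mem y).1] using (hχ_mem y).2
  refine sqrt_setIntegral_sq_mul_abs_le_of_eLpNorm_le (measurable_inner_sphere measurable_nvec)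
    (mul_pos hC hε.1).le (hestimate χ hχ_le hχ_zero _ _ _ ?_ ε hε) gammaMinus
  filter_upwards [Measure.quasiMeasurePreserving_fst.ae ae_mem_frontier_shell] with p hp
  have hp_closure := frontier_subset_closure hp
  exact ⟨abs_apply_sphere_le_one (hF₀ _ hp_closure) p.2,
    abs_apply_sphere_le_one (hF₁ _ (norm_eq_of_mem_sphere p.2) _ hp_closure) p.2, hΨ₀ p.1 p.2⟩
end
end

section
/- Let K > 0, A > 0, and ε ∈ (0,1). Let Ψ : [0,∞) × (−π/2,π/2) × (−π,π) → ℝ be continuously differentiable in φ with |Ψ(η,φ,ψ)| ≤ e^{−Kη} for all (η,φ,ψ) and |∂_φΨ(η,φ,ψ)| ≤ |sinφ|⁻¹ e^{−Kη} for all φ ≠ 0, and let a : [0,∞) × (−π,π) → ℝ be measurable with |a| ≤ A. Define the cut-off boundary layer U(η,φ,ψ) := χ̃(ε⁻¹φ) χ(εη) Ψ(η,φ,ψ) and the source term S₁(η,φ,ψ) := a(η,ψ) cosφ · ∂_φU(η,φ,ψ). Then ( ε ∫₀^∞ ∫_{−π/2}^{π/2} ∫_{−π}^{π} (1+η)² |S₁(η,φ,ψ)|²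 cosφ dψ dφ dη )^{1/2} ≤ C, where C depends only on K and A (not on ε or Ψ). -/
open MeasureTheory Real Set

noncomputable section

/-- The cut-off boundary layer `U = χ̃(ε⁻¹φ) χ(εη) Ψ(η,φ,ψ)`, where `χ̃ = 1 - χ`. -/
def cutU (χ : ℝ → ℝ) (ε : ℝ) (Ψ : ℝ → ℝ → ℝ → ℝ) (η φ ψ : ℝ) : ℝ :=
  (1 - χ (ε⁻¹ * φ)) * χ (ε * η) * Ψ η φ ψ

/-- The source term `S₁ = a(η,ψ) cos φ ∂_φ U`. -/
def S1 (χ : ℝ → ℝ) (ε : ℝ) (Ψ : ℝ → ℝ → ℝ → ℝ) (a : ℝ → ℝ → ℝ) (η φ ψ : ℝ) : ℝ :=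
  a η ψ * Real.cos φ * deriv (fun s => cutU χ ε Ψ η s ψ) φ

/-!
The operator `φ ∂_φ` is invariant under the scaling `φ ↦ ε⁻¹φ`, so `φ ∂_φ` of the cut-off
`χ̃(ε⁻¹φ)` is bounded uniformly in `ε`; since `|sin φ|` is comparable to `|φ|`, `φ ∂_φΨ` is bounded
by the same exponential as `Ψ`. As `∂_φU` vanishes for `|φ| < ε`, this improves `|∂_φU| ≲ |φ|⁻¹` to
`|∂_φU|² ≲ (ε² + φ²)⁻¹`, a Cauchy kernel of mass `π / ε`, and the factor `ε` in front of the
integral absorbs exactly this mass.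
-/

open Filter Topology

theorem norm_integral_integral_integral_le {α β γ F : Type*} [MeasurableSpace α]
    [MeasurableSpace β] [MeasurableSpace γ] [NormedAddCommGroup F] [NormedSpace ℝ F]
    {μ : Measure α} {ν : Measure β} {ρ : Measure γ} {f : α → β → γ → F}
    {u : α → ℝ} {v : β → ℝ} {w : γ → ℝ}
    (hu : Integrable u μ) (hv : Integrable v ν) (hw : Integrable w ρ)
    (hf : ∀ᵐ x ∂μ, ∀ᵐ y ∂ν, ∀ᵐ z ∂ρ, ‖f x y z‖ ≤ u x * (v y * w z)) :
    ‖∫ x, ∫ y, ∫ z, f x y z ∂ρ ∂ν ∂μ‖ ≤ (∫ x, u x ∂μ) * ((∫ y, v y ∂ν) * ∫ z, w z ∂ρ) := by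
  rw [← integral_mul_const]
  refine norm_integral_le_of_norm_le (hu.mul_const _) (hf.mono fun x hx => ?_)
  rw [← integral_mul_const, ← integral_const_mul]
  refine norm_integral_le_of_norm_le ((hv.mul_const _).const_mul _) (hx.mono fun y hy => ?_)
  rw [← integral_const_mul, ← integral_const_mul]
  exact norm_integral_le_of_norm_le ((hw.const_mul _).const_mul _) hy

theorem inv_sq_add_sq_eq {c : ℝ} (hc : c ≠ 0) (x : ℝ) :
    (c ^ 2 + x ^ 2)⁻¹ = (c ^ 2)⁻¹ * (1 + (x / c) ^ 2)⁻¹ := by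
  field_simp

theorem integrable_inv_sq_add_sq {c : ℝ} (hc : c ≠ 0) :
    Integrable fun x : ℝ => (c ^ 2 + x ^ 2)⁻¹ := by
  simp only [inv_sq_add_sq_eq hc]
  exact (integrable_inv_one_add_sq.comp_div hc).const_mul _

theorem integral_univ_inv_sq_add_sq {c : ℝ} (hc : 0 < c) :
    ∫ x : ℝ, (c ^ 2 + x ^ 2)⁻¹ = π / c := by
  simp only [inv_sq_add_sq_eq hc.ne']
  rw [integral_const_mul, Measure.integral_comp_div (fun x : ℝ => (1 + x ^ 2)⁻¹),
    integral_univ_inv_one_add_sq, abs_of_pos hc, smul_eq_mul]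
  field_simp

theorem setIntegral_inv_sq_add_sq_le {c : ℝ} (hc : 0 < c) (s : Set ℝ) :
    ∫ x in s, (c ^ 2 + x ^ 2)⁻¹ ≤ π / c :=
  (setIntegral_le_integral (integrable_inv_sq_add_sq hc.ne')
    (.of_forall fun x => by positivity)).trans_eq (integral_univ_inv_sq_add_sq hc)

theorem integrableOn_one_add_pow_mul_exp_neg_Ioi (n : ℕ) {b : ℝ} (hb : 0 < b) (c : ℝ) :
    IntegrableOn (fun x => (1 + x) ^ n * exp (-b * x)) (Ioi c) := by
  have one_add_isBigO : (fun x : ℝ => 1 + x) =O[atTop] fun x => x :=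
    (Asymptotics.isLittleO_const_id_atTop 1).isBigO.add (Asymptotics.isBigO_refl _ _)
  have pow_isBigO : (fun x : ℝ => (1 + x) ^ n) =O[atTop] fun x => exp (b / 2 * x) :=
    (one_add_isBigO.pow n).trans (isLittleO_pow_exp_pos_mul_atTop n (half_pos hb)).isBigO
  refine integrable_of_isBigO_exp_neg (half_pos hb) (by fun_prop) ?_
  refine (pow_isBigO.mul (Asymptotics.isBigO_refl _ _)).congr_right fun x => ?_
  rw [← exp_add]
  ring_nf

theorem integrableOn_one_add_pow_mul_exp_neg_pow_Ioi (n : ℕ) {m : ℕ} (hm : m ≠ 0) {b : ℝ}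
    (hb : 0 < b) (c : ℝ) : IntegrableOn (fun x => (1 + x) ^ n * exp (-b * x) ^ m) (Ioi c) := by
  have exp_pow_eq (x : ℝ) : exp (-b * x) ^ m = exp (-(m * b) * x) := by
    rw [← exp_nat_mul]
    ring_nf
  simp only [exp_pow_eq]
  exact integrableOn_one_add_pow_mul_exp_neg_Ioi n (by positivity) c

theorem exists_abs_mul_deriv_le {f : ℝ → ℝ} (hf : ContDiff ℝ 1 f) (hc : HasCompactSupport f) :
    ∃ M, ∀ y, |y * deriv f y| ≤ M :=
  (hc.deriv.mul_left (f := id)).exists_bound_of_continuous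
    (continuous_id.mul hf.continuous_deriv_one)

theorem abs_mul_inv_abs_sin_le {x : ℝ} (hx : |x| ≤ π / 2) : |x| * |sin x|⁻¹ ≤ π / 2 := by
  rcases eq_or_ne x 0 with rfl | hx0
  · simpa using pi_div_two_pos.le
  have hsin : 0 < |sin x| :=
    (mul_pos (by positivity) (abs_pos.2 hx0)).trans_le (mul_abs_le_abs_sin hx)
  rw [mul_inv_le_iff₀ hsin]
  calc |x| = π / 2 * (2 / π * |x|) := by field_simp
    _ ≤ π / 2 * |sin x| := by gcongr; exact mul_abs_le_abs_sin hx

theorem IsCutoff.hasCompactSupport {χ : ℝ → ℝ} (hχ : IsCutoff χ) : HasCompactSupport χ :=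
  HasCompactSupport.intro (isCompact_Icc (a := -2) (b := 2)) fun y hy =>
    hχ.2.2.2 y (not_lt.1 fun h => hy (abs_le.1 h.le))

section CutoffLayer

variable {χ : ℝ → ℝ} {ε η φ ψ : ℝ} {Ψ : ℝ → ℝ → ℝ → ℝ}

theorem deriv_cutU_eq_zero_of_abs_lt (hχ : IsCutoff χ) (hφ : |φ| < ε) :
    deriv (fun s => cutU χ ε Ψ η s ψ) φ = 0 := by
  have hε : 0 < ε := (abs_nonneg φ).trans_lt hφ
  have cutU_eq_zero : (fun s => cutU χ ε Ψ η s ψ) =ᶠ[𝓝 φ] fun _ => 0 := by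
    filter_upwards [continuous_abs.continuousAt.eventually (gt_mem_nhds hφ)] with s hs
    have cutoff_eq_one : χ (ε⁻¹ * s) = 1 := by
      apply hχ.2.2.1
      rw [abs_mul, abs_of_pos (inv_pos.2 hε), inv_mul_le_one₀ hε]
      exact hs.le
    simp [cutU, cutoff_eq_one]
  rw [cutU_eq_zero.deriv_eq, deriv_const]

theorem deriv_cutU (hχ : Differentiable ℝ χ) (hΨ : DifferentiableAt ℝ (fun s => Ψ η s ψ) φ) :
    deriv (fun s => cutU χ ε Ψ η s ψ) φ =
      -(deriv χ (ε⁻¹ * φ) * ε⁻¹) * χ (ε * η) * Ψ η φ ψ +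
        (1 - χ (ε⁻¹ * φ)) * χ (ε * η) * deriv (fun s => Ψ η s ψ) φ := by
  have cutoff_scaled : HasDerivAt (fun s => χ (ε⁻¹ * s)) (deriv χ (ε⁻¹ * φ) * ε⁻¹) φ :=
    (hχ _).hasDerivAt.comp φ (hasDerivAt_const_mul ε⁻¹)
  exact (((cutoff_scaled.const_sub 1).mul_const _).mul hΨ.hasDerivAt).deriv

theorem abs_mul_deriv_cutU_le (hχ : IsCutoff χ) {M c d : ℝ} (hM : ∀ y, |y * deriv χ y| ≤ M)
    (hdiff : DifferentiableAt ℝ (fun s => Ψ η s ψ) φ) (hΨ : |Ψ η φ ψ| ≤ d)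
    (hΨ' : |φ * deriv (fun s => Ψ η s ψ) φ| ≤ c * d) :
    |φ * deriv (fun s => cutU χ ε Ψ η s ψ) φ| ≤ (M + c) * d := by
  have hM0 : 0 ≤ M := (abs_nonneg _).trans (hM 0)
  obtain ⟨tangential_nonneg, tangential_le⟩ := hχ.2.1 (ε⁻¹ * φ)
  obtain ⟨normal_nonneg, normal_le⟩ := hχ.2.1 (ε * η)
  have abs_one_sub_le : |1 - χ (ε⁻¹ * φ)| ≤ 1 := abs_le.2 ⟨by linarith, by linarith⟩
  have abs_normal_le : |χ (ε * η)| ≤ 1 := abs_le.2 ⟨by linarith, normal_le⟩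
  calc |φ * deriv (fun s => cutU χ ε Ψ η s ψ) φ|
      = |-(ε⁻¹ * φ * deriv χ (ε⁻¹ * φ)) * χ (ε * η) * Ψ η φ ψ +
          (1 - χ (ε⁻¹ * φ)) * χ (ε * η) * (φ * deriv (fun s => Ψ η s ψ) φ)| := by
        rw [deriv_cutU (hχ.1.differentiable (by simp)) hdiff]
        ring_nf
    _ ≤ |ε⁻¹ * φ * deriv χ (ε⁻¹ * φ)| * |χ (ε * η)| * |Ψ η φ ψ| +
          |1 - χ (ε⁻¹ * φ)| * |χ (ε * η)| * |φ * deriv (fun s => Ψ η s ψ) φ| := by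
        refine (abs_add_le _ _).trans_eq ?_
        simp only [abs_mul, abs_neg]
    _ ≤ M * 1 * d + 1 * 1 * (c * d) := by
        gcongr
        exact hM _
    _ = (M + c) * d := by ring

theorem sq_deriv_cutU_le_of_abs_mul_deriv_le (hχ : IsCutoff χ) (hε : 0 < ε) {B : ℝ}
    (hB : ε ≤ |φ| → |φ * deriv (fun s => cutU χ ε Ψ η s ψ) φ| ≤ B) :
    deriv (fun s => cutU χ ε Ψ η s ψ) φ ^ 2 ≤ 2 * B ^ 2 * (ε ^ 2 + φ ^ 2)⁻¹ := by
  rcases lt_or_ge |φ| ε with hφ | hφ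
  · rw [deriv_cutU_eq_zero_of_abs_lt hχ hφ, zero_pow two_ne_zero]
    positivity
  have sq_le : ε ^ 2 ≤ φ ^ 2 := sq_le_sq' (by linarith [abs_nonneg φ]) hφ |>.trans_eq (sq_abs φ)
  rw [← div_eq_mul_inv, le_div_iff₀ (by positivity)]
  calc deriv (fun s => cutU χ ε Ψ η s ψ) φ ^ 2 * (ε ^ 2 + φ ^ 2)
      ≤ deriv (fun s => cutU χ ε Ψ η s ψ) φ ^ 2 * (φ ^ 2 + φ ^ 2) := by gcongr
    _ = 2 * |φ * deriv (fun s => cutU χ ε Ψ η s ψ) φ| ^ 2 := by rw [sq_abs]; ring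
    _ ≤ 2 * B ^ 2 := by gcongr; exact hB hφ

theorem abs_weighted_sq_S1_le {a : ℝ → ℝ → ℝ} {A D : ℝ} (ha : |a η ψ| ≤ A)
    (hD : deriv (fun s => cutU χ ε Ψ η s ψ) φ ^ 2 ≤ D) :
    |(1 + η) ^ 2 * S1 χ ε Ψ a η φ ψ ^ 2 * cos φ| ≤ (1 + η) ^ 2 * (A ^ 2 * D) := by
  have sq_a_le : a η ψ ^ 2 ≤ A ^ 2 := sq_le_sq.2 (ha.trans (le_abs_self A))
  have sq_S1_le : S1 χ ε Ψ a η φ ψ ^ 2 ≤ A ^ 2 * D := by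
    calc S1 χ ε Ψ a η φ ψ ^ 2
        = a η ψ ^ 2 * cos φ ^ 2 * deriv (fun s => cutU χ ε Ψ η s ψ) φ ^ 2 := by
          rw [S1, mul_pow, mul_pow]
      _ ≤ A ^ 2 * 1 * D := by gcongr; exact cos_sq_le_one φ
      _ = A ^ 2 * D := by rw [mul_one]
  calc |(1 + η) ^ 2 * S1 χ ε Ψ a η φ ψ ^ 2 * cos φ|
      = (1 + η) ^ 2 * S1 χ ε Ψ a η φ ψ ^ 2 * |cos φ| := by
        rw [abs_mul, abs_of_nonneg (by positivity)]
    _ ≤ (1 + η) ^ 2 * S1 χ ε Ψ a η φ ψ ^ 2 :=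
        mul_le_of_le_one_right (by positivity) (abs_cos_le_one φ)
    _ ≤ (1 + η) ^ 2 * (A ^ 2 * D) := by gcongr

end CutoffLayer

/-- The layer `Ψ` is dominated by the decay profile `E` in `η`, and its `φ`-derivative exists off
the grazing set `φ = 0` and blows up at most like `|sin φ|⁻¹` there. Only the values of `Ψ` on the
phase space `[0,∞) × (-π/2, π/2) × (-π, π)` are constrained. -/
structure HasGrazingBound (E : ℝ → ℝ) (Ψ : ℝ → ℝ → ℝ → ℝ) : Prop where
  differentiableAt : ∀ η ≥ 0, ∀ φ ∈ Ioo (-(π / 2)) (π / 2), φ ≠ 0 → ∀ ψ ∈ Ioo (-π) π,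
    DifferentiableAt ℝ (fun s => Ψ η s ψ) φ
  abs_apply_le : ∀ η ≥ 0, ∀ φ ∈ Ioo (-(π / 2)) (π / 2), ∀ ψ ∈ Ioo (-π) π, |Ψ η φ ψ| ≤ E η
  abs_deriv_le : ∀ η ≥ 0, ∀ φ ∈ Ioo (-(π / 2)) (π / 2), φ ≠ 0 → ∀ ψ ∈ Ioo (-π) π,
    |deriv (fun s => Ψ η s ψ) φ| ≤ |sin φ|⁻¹ * E η

namespace HasGrazingBound

variable {χ E : ℝ → ℝ} {Ψ : ℝ → ℝ → ℝ → ℝ} {M ε : ℝ}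

theorem abs_mul_deriv_le (h : HasGrazingBound E Ψ) {η φ ψ : ℝ} (hη : 0 ≤ η)
    (hφ : φ ∈ Ioo (-(π / 2)) (π / 2)) (hφ0 : φ ≠ 0) (hψ : ψ ∈ Ioo (-π) π) :
    |φ * deriv (fun s => Ψ η s ψ) φ| ≤ π / 2 * E η := by
  have hE : 0 ≤ E η := (abs_nonneg _).trans (h.abs_apply_le η hη φ hφ ψ hψ)
  calc |φ * deriv (fun s => Ψ η s ψ) φ|
      ≤ |φ| * (|sin φ|⁻¹ * E η) := by
        rw [abs_mul]
        gcongr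
        exact h.abs_deriv_le η hη φ hφ hφ0 ψ hψ
    _ = |φ| * |sin φ|⁻¹ * E η := (mul_assoc _ _ _).symm
    _ ≤ π / 2 * E η := by
        gcongr
        exact abs_mul_inv_abs_sin_le (abs_le.2 ⟨hφ.1.le, hφ.2.le⟩)

theorem sq_deriv_cutU_le (h : HasGrazingBound E Ψ) (hχ : IsCutoff χ)
    (hM : ∀ y, |y * deriv χ y| ≤ M) (hε : 0 < ε) {η φ ψ : ℝ} (hη : 0 ≤ η)
    (hφ : φ ∈ Ioo (-(π / 2)) (π / 2)) (hψ : ψ ∈ Ioo (-π) π) :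
    deriv (fun s => cutU χ ε Ψ η s ψ) φ ^ 2 ≤
      2 * ((M + π / 2) * E η) ^ 2 * (ε ^ 2 + φ ^ 2)⁻¹ := by
  refine sq_deriv_cutU_le_of_abs_mul_deriv_le hχ hε fun hεφ => ?_
  have hφ0 : φ ≠ 0 := abs_pos.1 (hε.trans_le hεφ)
  exact abs_mul_deriv_cutU_le hχ hM (h.differentiableAt η hη φ hφ hφ0 ψ hψ)
    (h.abs_apply_le η hη φ hφ ψ hψ) (h.abs_mul_deriv_le hη hφ hφ0 hψ)

theorem mul_integral_weighted_sq_S1_le (h : HasGrazingBound E Ψ)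
    (hE : IntegrableOn (fun η => (1 + η) ^ 2 * E η ^ 2) (Ioi 0)) (hχ : IsCutoff χ)
    (hM : ∀ y, |y * deriv χ y| ≤ M) (hε : 0 < ε) {a : ℝ → ℝ → ℝ} {A : ℝ}
    (ha : ∀ η ≥ 0, ∀ ψ ∈ Ioo (-π) π, |a η ψ| ≤ A) :
    ε * ∫ η in Ioi (0 : ℝ), ∫ φ in Ioo (-(π / 2)) (π / 2), ∫ ψ in Ioo (-π) π,
        (1 + η) ^ 2 * S1 χ ε Ψ a η φ ψ ^ 2 * cos φ ≤
      (2 * π * A * (M + π / 2)) ^ 2 * ∫ η in Ioi (0 : ℝ), (1 + η) ^ 2 * E η ^ 2 := by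
  set I := ∫ η in Ioi (0 : ℝ), (1 + η) ^ 2 * E η ^ 2
  have : 0 ≤ I := integral_nonneg fun η => by positivity
  let κ : ℝ := 2 * A ^ 2 * (M + π / 2) ^ 2
  have integral_const_eq : ∫ _ψ in Ioo (-π) π, κ = 2 * π * κ := by
    rw [setIntegral_const, volume_real_Ioo_of_le (by linarith [pi_pos]), smul_eq_mul]
    ring
  have integrand_le : ∀ η ∈ Ioi (0 : ℝ), ∀ φ ∈ Ioo (-(π / 2)) (π / 2), ∀ ψ ∈ Ioo (-π) π,
      ‖(1 + η) ^ 2 * S1 χ ε Ψ a η φ ψ ^ 2 * cos φ‖ ≤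
        (1 + η) ^ 2 * E η ^ 2 * ((ε ^ 2 + φ ^ 2)⁻¹ * κ) := fun η hη φ hφ ψ hψ =>
    (abs_weighted_sq_S1_le (ha η hη.le ψ hψ) (h.sq_deriv_cutU_le hχ hM hε hη.le hφ hψ)).trans_eq
      (by ring)
  have triple_integral_le := norm_integral_integral_integral_le
    hE (integrable_inv_sq_add_sq hε.ne').integrableOn
    (integrable_const (μ := volume.restrict (Ioo (-π) π)) κ) <|
      (ae_restrict_mem measurableSet_Ioi).mono fun η hη =>
        (ae_restrict_mem measurableSet_Ioo).mono fun φ hφ =>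
          (ae_restrict_mem measurableSet_Ioo).mono fun ψ hψ => integrand_le η hη φ hφ ψ hψ
  calc _ ≤ ε * (I * ((∫ φ in Ioo (-(π / 2)) (π / 2), (ε ^ 2 + φ ^ 2)⁻¹) *
            ∫ _ψ in Ioo (-π) π, κ)) := by
        gcongr
        exact (le_abs_self _).trans triple_integral_le
    _ ≤ ε * (I * (π / ε * (2 * π * κ))) := by
        rw [integral_const_eq]
        gcongr
        exact setIntegral_inv_sq_add_sq_le hε _
    _ = (2 * π * A * (M + π / 2)) ^ 2 * I := by
        simp only [κ]
        field_simp

end HasGrazingBound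

theorem s1_L2_bound_general {χ : ℝ → ℝ} (hχ : IsCutoff χ) {E : ℝ → ℝ}
    (hE : IntegrableOn (fun η => (1 + η) ^ 2 * E η ^ 2) (Ioi 0)) (A : ℝ) :
    ∃ C > (0 : ℝ), ∀ ε > (0 : ℝ), ∀ Ψ : ℝ → ℝ → ℝ → ℝ, ∀ a : ℝ → ℝ → ℝ,
      HasGrazingBound E Ψ →
      Measurable (fun p : ℝ × ℝ => a p.1 p.2) →
      (∀ η ≥ 0, ∀ ψ ∈ Ioo (-π) π, |a η ψ| ≤ A) →
      √(ε * ∫ η in Ioi (0 : ℝ), ∫ φ in Ioo (-(π / 2)) (π / 2), ∫ ψ in Ioo (-π) π,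
        (1 + η) ^ 2 * S1 χ ε Ψ a η φ ψ ^ 2 * cos φ) ≤ C := by
  obtain ⟨M, hM⟩ := exists_abs_mul_deriv_le (hχ.1.of_le (by simp)) hχ.hasCompactSupport
  let bound := (2 * π * A * (M + π / 2)) ^ 2 * ∫ η in Ioi (0 : ℝ), (1 + η) ^ 2 * E η ^ 2
  refine ⟨√bound + 1, by positivity, fun ε hε Ψ a hΨ _ ha => ?_⟩
  calc _ ≤ √bound := sqrt_le_sqrt (hΨ.mul_integral_weighted_sq_S1_le hE hχ hM hε ha)
    _ ≤ √bound + 1 := le_add_of_nonneg_right zero_le_one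

/-- Weighted `L²` bound for the source term `S₁`. -/
theorem s1_L2_bound (χ : ℝ → ℝ) (hχ : IsCutoff χ) (K A : ℝ) (hK : 0 < K) (hA : 0 < A) :
    ∃ C > (0:ℝ), ∀ ε ∈ Ioo (0:ℝ) 1, ∀ Ψ : ℝ → ℝ → ℝ → ℝ, ∀ a : ℝ → ℝ → ℝ,
      (∀ η ψ : ℝ, ContDiffOn ℝ 1 (fun φ => Ψ η φ ψ) (Ioo (-(π/2)) (π/2))) →
      (∀ η ≥ (0:ℝ), ∀ φ ∈ Ioo (-(π/2)) (π/2), ∀ ψ ∈ Ioo (-π) π,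
        |Ψ η φ ψ| ≤ Real.exp (-K * η)) →
      (∀ η ≥ (0:ℝ), ∀ φ ∈ Ioo (-(π/2)) (π/2), φ ≠ 0 → ∀ ψ ∈ Ioo (-π) π,
        |deriv (fun s => Ψ η s ψ) φ| ≤ |Real.sin φ|⁻¹ * Real.exp (-K * η)) →
      Measurable (fun p : ℝ × ℝ => a p.1 p.2) →
      (∀ η ψ : ℝ, |a η ψ| ≤ A) →
      Real.sqrt (ε * ∫ η in Ioi (0:ℝ), ∫ φ in Ioo (-(π/2)) (π/2), ∫ ψ in Ioo (-π) π,
        (1+η)^2 * (S1 χ ε Ψ a η φ ψ)^2 * Real.cos φ) ≤ C := by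
  obtain ⟨C, hC, hbound⟩ := s1_L2_bound_general hχ
    (integrableOn_one_add_pow_mul_exp_neg_pow_Ioi 2 two_ne_zero hK 0) A
  exact ⟨C, hC, fun ε hε Ψ a hdiff hΨ hΨ' hmeas ha => hbound ε hε.1 Ψ a
    ⟨fun η _ φ hφ _ ψ _ => ((hdiff η ψ).contDiffAt (Ioo_mem_nhds hφ.1 hφ.2)).differentiableAt
      one_ne_zero, hΨ, hΨ'⟩ hmeas fun η _ ψ _ => ha η ψ⟩
end
end

section
/- Let K > 0 and ε ∈ (0,1). Let Ψ : [0,∞) × (−π/2,π/2) × (−π,π) → ℝ be measurable with |Ψ(η,φ,ψ)| ≤ e^{−Kη}, and set Ψ̄(η) := (1/4π) ∫_{−π/2}^{π/2} ∫_{−π}^{π} Ψ(η,φ′,ψ′) cosφ′ dψ′ dφ′. Define S₃(η,φ,ψ) := ε⁻¹ [ (1/4π) ∫_{−π/2}^{π/2} ∫_{−π}^{π} χ̃(ε⁻¹φ′) χ(εη) Ψ(η,φ′,ψ′) cosφ′ dψ′ dφ′ − Ψ̄(η) χ̃(ε⁻¹φ) χ(εη) ]. Then ( ε ∫₀^∞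 ∫_{−π/2}^{π/2} ∫_{−π}^{π} (1+η)² |S₃|² cosφ dψ dφ dη )^{1/2} ≤ C and ( ε ∫₀^∞ (1+η)² ( ∫_{−π/2}^{π/2} ∫_{−π}^{π} |S₃| cosφ dψ dφ )² dη )^{1/2} ≤ C ε^{1/2}, where C depends only on K (not on ε or Ψ). -/
open MeasureTheory Real Set

noncomputable section

/-!
Since `χ̃ = 1 - χ`, averaging the cut-off layer and cutting off the average differ by
`χ(εη) (χ(ε⁻¹φ) ⟨Ψ⟩ - ⟨χ(ε⁻¹·) Ψ⟩)`, where `⟨·⟩` is the mean over the sphere. If `|Ψ| ≤ E`, this is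
at most `E (w + ⟨w⟩)` with `w = χ(ε⁻¹φ) ∈ [0, 1]`, so its `L¹` norm is at most `2 E ∫ w` and the
square of its `L²` norm at most `4 E² ∫ w`. The grazing set has size `∫ w = O(ε)`, which pays for
the prefactor `ε⁻¹` in `L¹` and for one of the two such factors in `L²`; the factor `ε` in front of
the `η`-integral pays for the other.
-/

section CutoffCommutator

variable {V : Type*} [MeasurableSpace V] {μ : Measure V} {w f : V → ℝ} {E : ℝ}

/-- The commutator of averaging over `μ` with multiplication by `1 - w`, applied to `f`. -/
def cutoffCommutator (μ : Measure V) (w f : V → ℝ) (v : V) : ℝ :=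
  (⨍ u, (1 - w u) * f u ∂μ) - (⨍ u, f u ∂μ) * (1 - w v)

lemma cutoffCommutator_eq (hf : Integrable f μ) (hwf : Integrable (fun u => w u * f u) μ) (v : V) :
    cutoffCommutator μ w f v = w v * (⨍ u, f u ∂μ) - ⨍ u, w u * f u ∂μ := by
  have split_average : ⨍ u, (1 - w u) * f u ∂μ = (⨍ u, f u ∂μ) - ⨍ u, w u * f u ∂μ := by
    simp only [average_eq, sub_mul, one_mul, integral_sub hf hwf, smul_sub]
  rw [cutoffCommutator, split_average]
  ring

lemma abs_average_le_average {g : V → ℝ} (hg : Integrable g μ) (hfg : ∀ᵐ v ∂μ, |f v| ≤ g v) :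
    |⨍ v, f v ∂μ| ≤ ⨍ v, g v ∂μ := by
  rw [average_eq, average_eq, smul_eq_mul, smul_eq_mul, abs_mul,
    abs_of_nonneg (inv_nonneg.2 measureReal_nonneg), ← Real.norm_eq_abs]
  exact mul_le_mul_of_nonneg_left (norm_integral_le_of_norm_le hg hfg)
    (inv_nonneg.2 measureReal_nonneg)

variable [IsFiniteMeasure μ]

lemma abs_average_le_of_ae_abs_le (hE : 0 ≤ E) (hfE : ∀ᵐ v ∂μ, |f v| ≤ E) :
    |⨍ v, f v ∂μ| ≤ E := by
  rcases eq_zero_or_neZero μ with rfl | _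
  · simpa using hE
  · exact (abs_average_le_average (integrable_const E) hfE).trans_eq (average_const μ E)

lemma integrable_cutoffCommutator (hw : Integrable w μ) :
    Integrable (cutoffCommutator μ w f) μ :=
  (integrable_const _).sub (((integrable_const 1).sub hw).const_mul _)

variable (hw : AEStronglyMeasurable w μ) (hw01 : ∀ v, w v ∈ Icc (0 : ℝ) 1)
  (hf : AEStronglyMeasurable f μ) (hE : 0 ≤ E) (hfE : ∀ᵐ v ∂μ, |f v| ≤ E)

include hw hw01 hf hE hfE

lemma abs_cutoffCommutator_le (v : V) :
    |cutoffCommutator μ w f v| ≤ E * (w v + ⨍ u, w u ∂μ) := by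
  have hwf_le : ∀ᵐ u ∂μ, |w u * f u| ≤ E * w u := by
    filter_upwards [hfE] with u hu
    rw [abs_mul, abs_of_nonneg (hw01 u).1, mul_comm]
    exact mul_le_mul_of_nonneg_right hu (hw01 u).1
  have hEw : Integrable (fun u => E * w u) μ :=
    .const_mul (.of_mem_Icc 0 1 hw.aemeasurable (.of_forall hw01)) E
  have average_le : |⨍ u, w u * f u ∂μ| ≤ E * ⨍ u, w u ∂μ := by
    simpa only [average_eq, integral_const_mul, smul_eq_mul, mul_left_comm]
      using abs_average_le_average hEw hwf_le
  rw [cutoffCommutator_eq (.of_bound hf E hfE) (hEw.mono' (hw.mul hf) hwf_le)]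
  calc |w v * (⨍ u, f u ∂μ) - ⨍ u, w u * f u ∂μ|
      ≤ w v * |⨍ u, f u ∂μ| + |⨍ u, w u * f u ∂μ| := by
        simpa only [abs_mul, abs_of_nonneg (hw01 v).1] using abs_sub (w v * ⨍ u, f u ∂μ) _
    _ ≤ w v * E + E * ⨍ u, w u ∂μ :=
        add_le_add (mul_le_mul_of_nonneg_left (abs_average_le_of_ae_abs_le hE hfE) (hw01 v).1)
          average_le
    _ = E * (w v + ⨍ u, w u ∂μ) := by ring

lemma integral_abs_cutoffCommutator_le :
    ∫ v, |cutoffCommutator μ w f v| ∂μ ≤ 2 * E * ∫ v, w v ∂μ := by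
  have hwi : Integrable w μ := .of_mem_Icc 0 1 hw.aemeasurable (.of_forall hw01)
  calc ∫ v, |cutoffCommutator μ w f v| ∂μ
      ≤ ∫ v, E * (w v + ⨍ u, w u ∂μ) ∂μ :=
        integral_mono (integrable_cutoffCommutator hwi).abs
          ((hwi.add (integrable_const _)).const_mul E)
          (abs_cutoffCommutator_le hw hw01 hf hE hfE)
    _ = 2 * E * ∫ v, w v ∂μ := by
        rw [integral_const_mul, integral_add hwi (integrable_const _), integral_average]
        ring

lemma sq_cutoffCommutator_le (v : V) :
    cutoffCommutator μ w f v ^ 2 ≤ 2 * E * |cutoffCommutator μ w f v| := by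
  have average_le_one : ⨍ u, w u ∂μ ≤ 1 :=
    (le_abs_self _).trans <| abs_average_le_of_ae_abs_le zero_le_one <| .of_forall fun u =>
      (abs_of_nonneg (hw01 u).1).trans_le (hw01 u).2
  have abs_le : |cutoffCommutator μ w f v| ≤ 2 * E := by
    have := mul_le_mul_of_nonneg_left (add_le_add (hw01 v).2 average_le_one) hE
    linarith [abs_cutoffCommutator_le hw hw01 hf hE hfE v]
  rw [← sq_abs, sq]
  exact mul_le_mul_of_nonneg_right abs_le (abs_nonneg _)

lemma integrable_sq_cutoffCommutator :
    Integrable (fun v => cutoffCommutator μ w f v ^ 2) μ := by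
  have hc : Integrable (cutoffCommutator μ w f) μ :=
    integrable_cutoffCommutator (.of_mem_Icc 0 1 hw.aemeasurable (.of_forall hw01))
  refine (hc.abs.const_mul (2 * E)).mono' (hc.aestronglyMeasurable.pow 2) (.of_forall fun v => ?_)
  rw [norm_of_nonneg (sq_nonneg _)]
  exact sq_cutoffCommutator_le hw hw01 hf hE hfE v

lemma integral_sq_cutoffCommutator_le :
    ∫ v, cutoffCommutator μ w f v ^ 2 ∂μ ≤ 4 * E ^ 2 * ∫ v, w v ∂μ := by
  have hc : Integrable (cutoffCommutator μ w f) μ :=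
    integrable_cutoffCommutator (.of_mem_Icc 0 1 hw.aemeasurable (.of_forall hw01))
  calc ∫ v, cutoffCommutator μ w f v ^ 2 ∂μ
      ≤ ∫ v, 2 * E * |cutoffCommutator μ w f v| ∂μ :=
        integral_mono (integrable_sq_cutoffCommutator hw hw01 hf hE hfE) (hc.abs.const_mul _)
          (sq_cutoffCommutator_le hw hw01 hf hE hfE)
    _ = 2 * E * ∫ v, |cutoffCommutator μ w f v| ∂μ := integral_const_mul _ _
    _ ≤ 2 * E * (2 * E * ∫ v, w v ∂μ) := by
        gcongr
        exact integral_abs_cutoffCommutator_le hw hw01 hf hE hfE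
    _ = 4 * E ^ 2 * ∫ v, w v ∂μ := by ring

end CutoffCommutator

section AngularMeasure

/-- The measure `cos φ dφ` on latitudes `φ ∈ (-π/2, π/2)`. -/
def latitudeMeasure : Measure ℝ :=
  (volume.restrict (Ioo (-(π / 2)) (π / 2))).withDensity fun φ => ENNReal.ofReal (cos φ)

/-- The surface measure `cos φ dφ dψ` of the unit sphere in the angular coordinates `(φ, ψ)`. -/
def angularMeasure : Measure (ℝ × ℝ) :=
  latitudeMeasure.prod (volume.restrict (Ioo (-π) π))

instance : IsFiniteMeasure latitudeMeasure :=
  isFiniteMeasure_withDensity_ofReal <|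
    (continuous_cos.integrableOn_Icc.mono_set Ioo_subset_Icc_self).hasFiniteIntegral

instance : IsFiniteMeasure angularMeasure := by
  unfold angularMeasure
  infer_instance

lemma integral_latitudeMeasure (g : ℝ → ℝ) :
    ∫ φ, g φ ∂latitudeMeasure = ∫ φ in Ioo (-(π / 2)) (π / 2), g φ * cos φ := by
  rw [latitudeMeasure, integral_withDensity_eq_integral_toReal_smul measurable_cos.ennreal_ofReal
    (.of_forall fun _ => ENNReal.ofReal_lt_top)]
  refine setIntegral_congr_fun measurableSet_Ioo fun φ hφ => ?_
  simp only [smul_eq_mul, ENNReal.toReal_ofReal (cos_pos_of_mem_Ioo hφ).le, mul_comm]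

lemma integral_angularMeasure {f : ℝ × ℝ → ℝ} (hf : Integrable f angularMeasure) :
    ∫ p, f p ∂angularMeasure =
      ∫ φ in Ioo (-(π / 2)) (π / 2), ∫ ψ in Ioo (-π) π, f (φ, ψ) * cos φ := by
  simp only [integral_mul_const]
  rw [angularMeasure, integral_prod f hf, integral_latitudeMeasure]

lemma ae_angularMeasure_of_forall {P : ℝ × ℝ → Prop}
    (hP : ∀ φ ∈ Ioo (-(π / 2)) (π / 2), ∀ ψ ∈ Ioo (-π) π, P (φ, ψ)) :
    ∀ᵐ p ∂angularMeasure, P p := by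
  have latitude_mem : ∀ᵐ φ ∂latitudeMeasure, φ ∈ Ioo (-(π / 2)) (π / 2) :=
    (withDensity_absolutelyContinuous _ _).ae_le (ae_restrict_mem measurableSet_Ioo)
  have longitude_mem : ∀ᵐ ψ ∂volume.restrict (Ioo (-π) π), ψ ∈ Ioo (-π) π :=
    ae_restrict_mem measurableSet_Ioo
  filter_upwards [Measure.quasiMeasurePreserving_fst.ae latitude_mem,
    Measure.quasiMeasurePreserving_snd.ae longitude_mem] with p hφ hψ using hP p.1 hφ p.2 hψ

lemma integral_mul_cos_nonneg {g : ℝ → ℝ} (hg : ∀ φ, 0 ≤ g φ) :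
    0 ≤ ∫ φ in Ioo (-(π / 2)) (π / 2), ∫ _ψ in Ioo (-π) π, g φ * cos φ :=
  setIntegral_nonneg measurableSet_Ioo fun φ hφ => integral_nonneg fun _ =>
    mul_nonneg (hg φ) (cos_pos_of_mem_Ioo hφ).le

lemma nonneg_of_abs_le_on_angles {f : ℝ → ℝ → ℝ} {E : ℝ}
    (hfE : ∀ φ ∈ Ioo (-(π / 2)) (π / 2), ∀ ψ ∈ Ioo (-π) π, |f φ ψ| ≤ E) : 0 ≤ E :=
  (abs_nonneg _).trans <| hfE 0 ⟨by linarith [pi_pos], by linarith [pi_pos]⟩ 0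
    ⟨by linarith [pi_pos], pi_pos⟩

lemma volume_real_Ioo_pi : volume.real (Ioo (-π) π) = 2 * π := by
  rw [Real.volume_real_Ioo_of_le (by linarith [pi_pos])]
  ring

lemma angularMeasure_real_univ : angularMeasure.real univ = 4 * π := by
  have integral_cos_Ioo : ∫ φ in Ioo (-(π / 2)) (π / 2), cos φ = 2 := by
    rw [← integral_Ioc_eq_integral_Ioo,
      ← intervalIntegral.integral_of_le (by linarith [pi_pos]), integral_cos]
    norm_num
  calc angularMeasure.real univ = ∫ _, (1 : ℝ) ∂angularMeasure := by simp
    _ = 4 * π := by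
        rw [integral_angularMeasure (integrable_const 1)]
        simp only [one_mul, setIntegral_const, volume_real_Ioo_pi, smul_eq_mul, integral_const_mul,
          integral_cos_Ioo]
        ring

variable {χ : ℝ → ℝ} {ε : ℝ}

lemma aestronglyMeasurable_comp_inv_mul_fst (hχ : Integrable χ) (hε : 0 < ε) :
    AEStronglyMeasurable (fun p : ℝ × ℝ => χ (ε⁻¹ * p.1)) angularMeasure :=
  ((hχ.comp_mul_left' (inv_ne_zero hε.ne')).aestronglyMeasurable.restrict.mono_ac
    (withDensity_absolutelyContinuous _ _)).comp_fst

lemma integral_comp_inv_mul_fst_le (hχ : Integrable χ) (hχ01 : ∀ y, χ y ∈ Icc (0 : ℝ) 1)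
    (hε : 0 < ε) :
    ∫ p, χ (ε⁻¹ * p.1) ∂angularMeasure ≤ 2 * π * ε * ∫ y, χ y := by
  have hχε : Integrable fun φ => χ (ε⁻¹ * φ) := hχ.comp_mul_left' (inv_ne_zero hε.ne')
  have integral_mul_cos_le : ∫ φ in Ioo (-(π / 2)) (π / 2), χ (ε⁻¹ * φ) * cos φ ≤ ε * ∫ y, χ y :=
    calc ∫ φ in Ioo (-(π / 2)) (π / 2), χ (ε⁻¹ * φ) * cos φ
        ≤ ∫ φ in Ioo (-(π / 2)) (π / 2), χ (ε⁻¹ * φ) :=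
          setIntegral_mono_of_nonneg
            (fun φ hφ => mul_nonneg (hχ01 _).1 (cos_pos_of_mem_Ioo hφ).le)
            (fun φ _ => mul_le_of_le_one_right (hχ01 _).1 (cos_le_one φ)) hχε.integrableOn
      _ ≤ ∫ φ, χ (ε⁻¹ * φ) := setIntegral_le_integral hχε (.of_forall fun φ => (hχ01 _).1)
      _ = ε * ∫ y, χ y := by
          rw [Measure.integral_comp_mul_left, inv_inv, abs_of_pos hε, smul_eq_mul]
  rw [angularMeasure, integral_fun_fst (fun φ => χ (ε⁻¹ * φ)), integral_latitudeMeasure,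
    measureReal_restrict_apply_univ, volume_real_Ioo_pi, smul_eq_mul, mul_assoc (2 * π)]
  exact mul_le_mul_of_nonneg_left integral_mul_cos_le two_pi_pos.le

end AngularMeasure

section AveragedSource

/-- The source term `S₃` of the cut-off boundary layer. It does not depend on `ψ`. -/
def averagedSource (χ : ℝ → ℝ) (ε : ℝ) (Ψ : ℝ → ℝ → ℝ → ℝ) (η φ : ℝ) : ℝ :=
  ε⁻¹ * ((4 * π)⁻¹ * (∫ φ' in Ioo (-(π / 2)) (π / 2), ∫ ψ' in Ioo (-π) π,
      cutU χ ε Ψ η φ' ψ' * cos φ')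
    - ((4 * π)⁻¹ * ∫ φ' in Ioo (-(π / 2)) (π / 2), ∫ ψ' in Ioo (-π) π, Ψ η φ' ψ' * cos φ')
      * (1 - χ (ε⁻¹ * φ)) * χ (ε * η))

variable {χ : ℝ → ℝ} {ε : ℝ} {Ψ : ℝ → ℝ → ℝ → ℝ}

section FixedDepth

variable {η E : ℝ} (hχ : Integrable χ) (hχ01 : ∀ y, χ y ∈ Icc (0 : ℝ) 1) (hε : 0 < ε)
  (hΨ : Measurable fun p : ℝ × ℝ => Ψ η p.1 p.2)
  (hΨE : ∀ φ ∈ Ioo (-(π / 2)) (π / 2), ∀ ψ ∈ Ioo (-π) π, |Ψ η φ ψ| ≤ E)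

include hχ hχ01 hε hΨ hΨE

lemma averagedSource_eq_cutoffCommutator (p : ℝ × ℝ) :
    averagedSource χ ε Ψ η p.1 = ε⁻¹ * χ (ε * η) *
      cutoffCommutator angularMeasure (fun p => χ (ε⁻¹ * p.1)) (fun p => Ψ η p.1 p.2) p := by
  have hΨi : Integrable (fun p : ℝ × ℝ => Ψ η p.1 p.2) angularMeasure :=
    .of_bound hΨ.aestronglyMeasurable E (ae_angularMeasure_of_forall hΨE)
  have hχΨi : Integrable (fun p : ℝ × ℝ => (1 - χ (ε⁻¹ * p.1)) * Ψ η p.1 p.2) angularMeasure :=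
    hΨi.bdd_mul (c := 1)
      (aestronglyMeasurable_const.sub (aestronglyMeasurable_comp_inv_mul_fst hχ hε))
      (.of_forall fun p => by
        rw [norm_of_nonneg (sub_nonneg.2 (hχ01 _).2)]; linarith [(hχ01 (ε⁻¹ * p.1)).1])
  have integral_cutU : ∫ φ' in Ioo (-(π / 2)) (π / 2), ∫ ψ' in Ioo (-π) π,
      cutU χ ε Ψ η φ' ψ' * cos φ' =
        χ (ε * η) * ∫ p, (1 - χ (ε⁻¹ * p.1)) * Ψ η p.1 p.2 ∂angularMeasure := by
    simp only [integral_angularMeasure hχΨi, cutU, ← integral_const_mul]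
    congr! 4
    ring
  rw [averagedSource, integral_cutU, cutoffCommutator, average_eq, average_eq,
    angularMeasure_real_univ, integral_angularMeasure hΨi, smul_eq_mul, smul_eq_mul]
  ring

lemma integral_abs_averagedSource_le :
    ∫ φ in Ioo (-(π / 2)) (π / 2), ∫ _ψ in Ioo (-π) π, |averagedSource χ ε Ψ η φ| * cos φ ≤
      4 * π * (∫ y, χ y) * E := by
  have hw := aestronglyMeasurable_comp_inv_mul_fst hχ hε
  have hw01 (p : ℝ × ℝ) : χ (ε⁻¹ * p.1) ∈ Icc (0 : ℝ) 1 := hχ01 _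
  have hE : 0 ≤ E := nonneg_of_abs_le_on_angles hΨE
  have hS (p : ℝ × ℝ) := averagedSource_eq_cutoffCommutator hχ hχ01 hε hΨ hΨE p
  have hSi : Integrable (fun p : ℝ × ℝ => |averagedSource χ ε Ψ η p.1|) angularMeasure := by
    simp only [hS]
    exact ((integrable_cutoffCommutator
      (.of_mem_Icc 0 1 hw.aemeasurable (.of_forall hw01))).const_mul _).abs
  have hc : |ε⁻¹ * χ (ε * η)| ≤ ε⁻¹ := by
    rw [abs_of_nonneg (mul_nonneg (inv_nonneg.2 hε.le) (hχ01 _).1)]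
    exact mul_le_of_le_one_right (inv_nonneg.2 hε.le) (hχ01 _).2
  rw [← integral_angularMeasure hSi]
  simp only [hS, abs_mul _ (cutoffCommutator _ _ _ _), integral_const_mul]
  calc _ ≤ ε⁻¹ * (2 * E * (2 * π * ε * ∫ y, χ y)) := by
        gcongr
        refine (integral_abs_cutoffCommutator_le hw hw01 hΨ.aestronglyMeasurable hE
          (ae_angularMeasure_of_forall hΨE)).trans ?_
        gcongr
        exact integral_comp_inv_mul_fst_le hχ hχ01 hε
    _ = 4 * π * (∫ y, χ y) * E := by field_simp; ring

lemma integral_sq_averagedSource_le :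
    ∫ φ in Ioo (-(π / 2)) (π / 2), ∫ _ψ in Ioo (-π) π, averagedSource χ ε Ψ η φ ^ 2 * cos φ ≤
      8 * π * ε⁻¹ * (∫ y, χ y) * E ^ 2 := by
  have hw := aestronglyMeasurable_comp_inv_mul_fst hχ hε
  have hw01 (p : ℝ × ℝ) : χ (ε⁻¹ * p.1) ∈ Icc (0 : ℝ) 1 := hχ01 _
  have hE : 0 ≤ E := nonneg_of_abs_le_on_angles hΨE
  have hΨae : ∀ᵐ p ∂angularMeasure, |Ψ η p.1 p.2| ≤ E := ae_angularMeasure_of_forall hΨE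
  have hS (p : ℝ × ℝ) := averagedSource_eq_cutoffCommutator hχ hχ01 hε hΨ hΨE p
  have hSi : Integrable (fun p : ℝ × ℝ => averagedSource χ ε Ψ η p.1 ^ 2) angularMeasure := by
    simp only [hS, mul_pow _ (cutoffCommutator _ _ _ _)]
    exact (integrable_sq_cutoffCommutator hw hw01 hΨ.aestronglyMeasurable hE hΨae).const_mul _
  have hc : (ε⁻¹ * χ (ε * η)) ^ 2 ≤ ε⁻¹ ^ 2 :=
    pow_le_pow_left₀ (mul_nonneg (inv_nonneg.2 hε.le) (hχ01 _).1)
      (mul_le_of_le_one_right (inv_nonneg.2 hε.le) (hχ01 _).2) 2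
  rw [← integral_angularMeasure hSi]
  simp only [hS, mul_pow _ (cutoffCommutator _ _ _ _), integral_const_mul]
  calc _ ≤ ε⁻¹ ^ 2 * (4 * E ^ 2 * (2 * π * ε * ∫ y, χ y)) := by
        gcongr
        refine (integral_sq_cutoffCommutator_le hw hw01 hΨ.aestronglyMeasurable hE hΨae).trans ?_
        gcongr
        exact integral_comp_inv_mul_fst_le hχ hχ01 hε
    _ = 8 * π * ε⁻¹ * (∫ y, χ y) * E ^ 2 := by field_simp; ring

end FixedDepth

section WeightedNorms

variable {m E : ℝ → ℝ} (hχ : Integrable χ) (hχ01 : ∀ y, χ y ∈ Icc (0 : ℝ) 1) (hε : 0 < ε)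
  (hm : ∀ η > 0, 0 ≤ m η) (hmE : IntegrableOn (fun η => m η * E η ^ 2) (Ioi 0))
  (hΨ : ∀ η > 0, Measurable fun p : ℝ × ℝ => Ψ η p.1 p.2)
  (hΨE : ∀ η > 0, ∀ φ ∈ Ioo (-(π / 2)) (π / 2), ∀ ψ ∈ Ioo (-π) π, |Ψ η φ ψ| ≤ E η)

include hχ hχ01 hε hm hmE hΨ hΨE

lemma mul_integral_weight_sq_averagedSource_le :
    ε * ∫ η in Ioi (0 : ℝ), ∫ φ in Ioo (-(π / 2)) (π / 2), ∫ _ψ in Ioo (-π) π,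
        m η * averagedSource χ ε Ψ η φ ^ 2 * cos φ ≤
      8 * π * (∫ y, χ y) * ∫ η in Ioi 0, m η * E η ^ 2 := by
  have factor_weight (η : ℝ) : ∫ φ in Ioo (-(π / 2)) (π / 2), ∫ _ψ in Ioo (-π) π,
      m η * averagedSource χ ε Ψ η φ ^ 2 * cos φ =
        m η * ∫ φ in Ioo (-(π / 2)) (π / 2), ∫ _ψ in Ioo (-π) π,
          averagedSource χ ε Ψ η φ ^ 2 * cos φ := by
    simp only [mul_assoc, integral_const_mul]
  simp only [factor_weight]
  calc ε * ∫ η in Ioi (0 : ℝ), m η * ∫ φ in Ioo (-(π / 2)) (π / 2), ∫ _ψ in Ioo (-π) π,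
        averagedSource χ ε Ψ η φ ^ 2 * cos φ
      ≤ ε * ∫ η in Ioi (0 : ℝ), 8 * π * ε⁻¹ * (∫ y, χ y) * (m η * E η ^ 2) := by
        refine mul_le_mul_of_nonneg_left (setIntegral_mono_of_nonneg (fun η hη => ?_)
          (fun η hη => ?_) (hmE.const_mul _)) hε.le
        · exact mul_nonneg (hm η hη) <| integral_mul_cos_nonneg fun _ => sq_nonneg _
        · rw [mul_left_comm]
          exact mul_le_mul_of_nonneg_left
            (integral_sq_averagedSource_le hχ hχ01 hε (hΨ η hη) (hΨE η hη)) (hm η hη)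
    _ = 8 * π * (∫ y, χ y) * ∫ η in Ioi 0, m η * E η ^ 2 := by
        rw [integral_const_mul]
        field_simp

lemma integral_weight_sq_integral_abs_averagedSource_le :
    ∫ η in Ioi (0 : ℝ), m η * (∫ φ in Ioo (-(π / 2)) (π / 2), ∫ _ψ in Ioo (-π) π,
        |averagedSource χ ε Ψ η φ| * cos φ) ^ 2 ≤
      (4 * π * ∫ y, χ y) ^ 2 * ∫ η in Ioi 0, m η * E η ^ 2 := by
  rw [← integral_const_mul]
  refine setIntegral_mono_of_nonneg (fun η hη => mul_nonneg (hm η hη) (sq_nonneg _))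
    (fun η hη => ?_) (hmE.const_mul _)
  rw [mul_left_comm, ← mul_pow]
  exact mul_le_mul_of_nonneg_left (pow_le_pow_left₀ (integral_mul_cos_nonneg fun _ => abs_nonneg _)
    (integral_abs_averagedSource_le hχ hχ01 hε (hΨ η hη) (hΨE η hη)) 2) (hm η hη)

end WeightedNorms

end AveragedSource

lemma IsCutoff.integrable {χ : ℝ → ℝ} (hχ : IsCutoff χ) : Integrable χ := by
  obtain ⟨hsmooth, -, -, hzero⟩ := hχ
  refine hsmooth.continuous.integrable_of_hasCompactSupport
    (.intro (isCompact_Icc (a := -2) (b := 2)) fun y hy => hzero y ?_)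
  contrapose! hy
  exact abs_le.1 hy.le

lemma integrableOn_one_add_sq_mul_exp_sq {K : ℝ} (hK : 0 < K) :
    IntegrableOn (fun η => (1 + η) ^ 2 * exp (-K * η) ^ 2) (Ioi 0) := by
  have one_add_isBigO : (fun η : ℝ => 1 + η) =O[Filter.atTop] fun η => exp (K / 2 * η) := by
    simpa using (isLittleO_pow_exp_pos_mul_atTop 0 (half_pos hK)).isBigO.add
      (isLittleO_pow_exp_pos_mul_atTop 1 (half_pos hK)).isBigO
  refine integrable_of_isBigO_exp_neg hK (by fun_prop) ?_
  refine ((one_add_isBigO.pow 2).mul (Asymptotics.isBigO_refl _ _)).congr_right fun η => ?_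
  simp only [← exp_nat_mul, ← exp_add]
  ring_nf

theorem s3_bounds_general {χ m E : ℝ → ℝ} (hχ : Integrable χ) (hχ01 : ∀ y, χ y ∈ Icc (0 : ℝ) 1)
    (hm : ∀ η > 0, 0 ≤ m η) (hmE : IntegrableOn (fun η => m η * E η ^ 2) (Ioi 0)) :
    ∃ C > 0, ∀ ε > 0, ∀ Ψ : ℝ → ℝ → ℝ → ℝ,
      Measurable (fun p : ℝ × ℝ × ℝ => Ψ p.1 p.2.1 p.2.2) →
      (∀ η > 0, ∀ φ ∈ Ioo (-(π / 2)) (π / 2), ∀ ψ ∈ Ioo (-π) π, |Ψ η φ ψ| ≤ E η) →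
      √(ε * ∫ η in Ioi (0 : ℝ), ∫ φ in Ioo (-(π / 2)) (π / 2), ∫ _ψ in Ioo (-π) π,
          m η * averagedSource χ ε Ψ η φ ^ 2 * cos φ) ≤ C ∧
      √(ε * ∫ η in Ioi (0 : ℝ), m η * (∫ φ in Ioo (-(π / 2)) (π / 2), ∫ _ψ in Ioo (-π) π,
          |averagedSource χ ε Ψ η φ| * cos φ) ^ 2) ≤ C * √ε := by
  set A := 8 * π * (∫ y, χ y) * ∫ η in Ioi 0, m η * E η ^ 2
  set B := (4 * π * ∫ y, χ y) ^ 2 * ∫ η in Ioi 0, m η * E η ^ 2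
  refine ⟨√A + √B + 1, by positivity, fun ε hε Ψ hΨ hΨE => ?_⟩
  have hΨη (η : ℝ) (_ : η > 0) : Measurable fun p : ℝ × ℝ => Ψ η p.1 p.2 :=
    hΨ.comp measurable_prodMk_left
  constructor
  · calc _ ≤ √A := sqrt_le_sqrt
          (mul_integral_weight_sq_averagedSource_le hχ hχ01 hε hm hmE hΨη hΨE)
      _ ≤ √A + √B + 1 := by linarith [sqrt_nonneg B]
  · rw [mul_comm ε, sqrt_mul' _ hε.le]
    gcongr
    calc _ ≤ √B := sqrt_le_sqrt
          (integral_weight_sq_integral_abs_averagedSource_le hχ hχ01 hε hm hmE hΨη hΨE)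
      _ ≤ √A + √B + 1 := by linarith [sqrt_nonneg A]

/-- Bounds for the averaged source term `S₃`: weighted `L²` bound of
order `1` and weighted `L²_ηL¹_w` bound of order `ε^{1/2}`. -/
theorem s3_bounds (χ : ℝ → ℝ) (hχ : IsCutoff χ) (K : ℝ) (hK : 0 < K) :
    ∃ C > (0:ℝ), ∀ ε ∈ Ioo (0:ℝ) 1, ∀ Ψ : ℝ → ℝ → ℝ → ℝ,
      Measurable (fun p : ℝ × ℝ × ℝ => Ψ p.1 p.2.1 p.2.2) →
      (∀ η ≥ (0:ℝ), ∀ φ ∈ Ioo (-(π/2)) (π/2), ∀ ψ ∈ Ioo (-π) π,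
        |Ψ η φ ψ| ≤ Real.exp (-K * η)) →
      ∀ S₃ : ℝ → ℝ → ℝ → ℝ,
      (∀ η φ ψ : ℝ, S₃ η φ ψ =
        ε⁻¹ * ((4*π)⁻¹ * (∫ φ' in Ioo (-(π/2)) (π/2), ∫ ψ' in Ioo (-π) π,
            (1 - χ (ε⁻¹ * φ')) * χ (ε * η) * Ψ η φ' ψ' * Real.cos φ')
          - ((4*π)⁻¹ * ∫ φ' in Ioo (-(π/2)) (π/2), ∫ ψ' in Ioo (-π) π,
              Ψ η φ' ψ' * Real.cos φ') * (1 - χ (ε⁻¹ * φ)) * χ (ε * η))) →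
      Real.sqrt (ε * ∫ η in Ioi (0:ℝ), ∫ φ in Ioo (-(π/2)) (π/2), ∫ ψ in Ioo (-π) π,
          (1+η)^2 * (S₃ η φ ψ)^2 * Real.cos φ) ≤ C ∧
      Real.sqrt (ε * ∫ η in Ioi (0:ℝ), (1+η)^2 * (∫ φ in Ioo (-(π/2)) (π/2),
          ∫ ψ in Ioo (-π) π, |S₃ η φ ψ| * Real.cos φ)^2) ≤ C * Real.sqrt ε := by
  obtain ⟨C, hC, hbound⟩ := s3_bounds_general hχ.integrable hχ.2.1
    (fun η _ => sq_nonneg (1 + η)) (integrableOn_one_add_sq_mul_exp_sq hK)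
  refine ⟨C, hC, fun ε hε Ψ hΨ hΨK S₃ hS => ?_⟩
  obtain rfl : S₃ = fun η φ _ => averagedSource χ ε Ψ η φ := by
    ext η φ ψ
    exact hS η φ ψ
  exact hbound ε hε.1 Ψ hΨ fun η hη => hΨK η hη.le
end
end
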